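/- Let 0 ≠ μ ∈ V_n be a symmetric Leibniz algebra structure on ℂ^n with M_μ = c·I + D for some c ∈ ℝ and some D ∈ Der(μ), and set 𝔩₀ := ker D. If Z ∈ 𝔩₀ satisfies μ(Z,A) = μ(A,Z) = 0 for all A ∈ 𝔩₀, then the operators L^μ_Z and R^μ_Z are normal: [L^μ_Z, (L^μ_Z)*] = 0 and [R^μ_Z, (R^μ_Z)*] = 0. -/

import Mathlib

/-!
The pairing `⟪ν, ξ⟫ = ∑ i j, ⟪ν (e i) (e j), ξ (e i) (e j)⟫` on bilinear maps satisfies two identities: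
the adjoint of the action `ξ ↦ A.ξ` is `ν ↦ A*.ν`, and `tr (M_μ A) = 2 ⟪μ, A.μ⟫`
(`M_μ` is a moment map). For a derivation `A` they give
`2 ‖A*.μ‖² = 2 ⟪μ, [A, A*].μ⟫ = tr (M_μ [A, A*]) = tr (D [A, A*]) = tr ([D, A] A*)`,
so if `A` also commutes with `D`, then `A*` is again a derivation (`isDer_adjoint`).

Since `μ` is symmetric Leibniz and `D Z = 0`, both `A = L_Z` and `A = R_Z` are derivations commuting
with `D`, hence `A*` is a derivation and `[A*, L_Z] = L_{A* Z}`, `[A*, R_Z] = R_{A* Z}`. Finally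
`A* Z = 0`: as `D` is Hermitian, `A* Z` lies in `ker D`, which `A` annihilates by centrality of `Z`,
so `‖A* Z‖² = ⟪Z, A A* Z⟫ = 0`.
-/

open scoped InnerProductSpace ComplexOrder
open LinearMap

noncomputable section

abbrev E (n : ℕ) := EuclideanSpace ℂ (Fin n)

abbrev Vb (n : ℕ) := E n →ₗ[ℂ] E n →ₗ[ℂ] E n

def e (n : ℕ) (i : Fin n) : E n := EuclideanSpace.single i 1

def Lop {n : ℕ} (μ : Vb n) (X : E n) : E n →ₗ[ℂ] E n := μ X

def Rop {n : ℕ} (μ : Vb n) (X : E n) : E n →ₗ[ℂ] E n := μ.flip X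

def Mmap {n : ℕ} (μ : Vb n) : E n →ₗ[ℂ] E n :=
  (2 : ℂ) • ∑ i, Lop μ (e n i) ∘ₗ adjoint (Lop μ (e n i))
  - (2 : ℂ) • ∑ i, adjoint (Lop μ (e n i)) ∘ₗ Lop μ (e n i)
  - (2 : ℂ) • ∑ i, adjoint (Rop μ (e n i)) ∘ₗ Rop μ (e n i)

/-- `A` is a derivation of `μ`. -/
def IsDer {n : ℕ} (μ : Vb n) (A : E n →ₗ[ℂ] E n) : Prop :=
  ∀ X Y, A (μ X Y) = μ (A X) Y + μ X (A Y)

def normSq {n : ℕ} (μ : Vb n) : ℝ :=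
  ∑ i, ∑ j, ∑ k, ‖(⟪e n k, μ (e n i) (e n j)⟫_ℂ : ℂ)‖ ^ 2

/-- `μ` is a left Leibniz algebra structure. -/
def IsLeftLeibniz {n : ℕ} (μ : Vb n) : Prop :=
  ∀ x y z : E n, μ x (μ y z) = μ (μ x y) z + μ y (μ x z)

/-- `μ` is a symmetric Leibniz algebra structure. -/
def IsSymLeibniz {n : ℕ} (μ : Vb n) : Prop :=
  IsLeftLeibniz μ ∧ ∀ x y z : E n, μ (μ x y) z = μ (μ x z) y + μ x (μ y z)

/-- The infinitesimal action `A.ν` of an endomorphism on a bilinear map: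
`(A.ν)(X, Y) = A ν(X, Y) - ν(A X, Y) - ν(X, A Y)`. -/
def act {n : ℕ} (A : E n →ₗ[ℂ] E n) (ν : Vb n) : Vb n :=
  ν.compr₂ A - ν ∘ₗ A - ν.compl₂ A

lemma act_apply {n : ℕ} (A : E n →ₗ[ℂ] E n) (ν : Vb n) (X Y : E n) :
    act A ν X Y = A (ν X Y) - ν (A X) Y - ν X (A Y) := by
  simp [act]

/-- The Hermitian inner product on bilinear maps for which the structure constants are
orthonormal coordinates. -/
def pair {n : ℕ} (ν ξ : Vb n) : ℂ := ∑ i, ∑ j, ⟪ν (e n i) (e n j), ξ (e n i) (e n j)⟫_ℂ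

lemma trace_eq {n : ℕ} (T : E n →ₗ[ℂ] E n) :
    LinearMap.trace ℂ _ T = ∑ i, ⟪e n i, T (e n i)⟫_ℂ := by
  rw [LinearMap.trace_eq_sum_inner T (EuclideanSpace.basisFun (Fin n) ℂ)]
  simp [e]

/-- Moving an operator across the Hilbert–Schmidt product, by cyclicity of the trace. -/
lemma sum_inner_comp {n : ℕ} (f g A : E n →ₗ[ℂ] E n) :
    ∑ i, ⟪f (e n i), g (A (e n i))⟫_ℂ = ∑ i, ⟪f (adjoint A (e n i)), g (e n i)⟫_ℂ := by
  have h1 := trace_eq (adjoint f ∘ₗ g ∘ₗ A)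
  have h2 := trace_eq (A ∘ₗ adjoint f ∘ₗ g)
  have h3 : LinearMap.trace ℂ _ (adjoint f ∘ₗ g ∘ₗ A)
      = LinearMap.trace ℂ _ (A ∘ₗ adjoint f ∘ₗ g) :=
    LinearMap.trace_mul_comm ℂ (adjoint f * g) A
  rw [h1, h2] at h3
  simpa [LinearMap.adjoint_inner_right, ← LinearMap.adjoint_inner_left] using h3

lemma pair_act {n : ℕ} (A : E n →ₗ[ℂ] E n) (ν ξ : Vb n) :
    pair ν (act A ξ) = pair (act (adjoint A) ν) ξ := by
  have h1 : ∑ i, ∑ j, ⟪ν (e n i) (e n j), ξ (A (e n i)) (e n j)⟫_ℂ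
      = ∑ i, ∑ j, ⟪ν (adjoint A (e n i)) (e n j), ξ (e n i) (e n j)⟫_ℂ := by
    rw [Finset.sum_comm, Finset.sum_comm (f := fun i j =>
      ⟪ν (adjoint A (e n i)) (e n j), ξ (e n i) (e n j)⟫_ℂ)]
    exact Finset.sum_congr rfl fun j _ =>
      sum_inner_comp (ν.flip (e n j)) (ξ.flip (e n j)) A
  have h2 : ∑ i, ∑ j, ⟪ν (e n i) (e n j), ξ (e n i) (A (e n j))⟫_ℂ
      = ∑ i, ∑ j, ⟪ν (e n i) (adjoint A (e n j)), ξ (e n i) (e n j)⟫_ℂ :=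
    Finset.sum_congr rfl fun i _ => sum_inner_comp (ν (e n i)) (ξ (e n i)) A
  simp only [pair, act_apply, inner_sub_left, inner_sub_right, Finset.sum_sub_distrib, h1, h2,
    LinearMap.adjoint_inner_left]

/-- The moment map property of `M_μ`. -/
lemma trace_Mmap {n : ℕ} (μ : Vb n) (A : E n →ₗ[ℂ] E n) :
    LinearMap.trace ℂ _ (Mmap μ ∘ₗ A) = 2 * pair μ (act A μ) := by
  have h1 : ∀ i, LinearMap.trace ℂ _ ((Lop μ (e n i) ∘ₗ adjoint (Lop μ (e n i))) ∘ₗ A)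
      = ∑ j, ⟪μ (e n i) (e n j), A (μ (e n i) (e n j))⟫_ℂ := fun i => by
    have h : LinearMap.trace ℂ _ ((Lop μ (e n i) ∘ₗ adjoint (Lop μ (e n i))) ∘ₗ A)
        = LinearMap.trace ℂ _ ((adjoint (Lop μ (e n i)) ∘ₗ A) ∘ₗ Lop μ (e n i)) :=
      LinearMap.trace_mul_comm ℂ (Lop μ (e n i)) (adjoint (Lop μ (e n i)) * A)
    rw [h, trace_eq]
    simp [LinearMap.adjoint_inner_right, Lop]
  have h2 : ∀ i, LinearMap.trace ℂ _ ((adjoint (Lop μ (e n i)) ∘ₗ Lop μ (e n i)) ∘ₗ A)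
      = ∑ j, ⟪μ (e n i) (e n j), μ (e n i) (A (e n j))⟫_ℂ := fun i => by
    rw [trace_eq]
    simp [LinearMap.adjoint_inner_right, Lop]
  have h3 : ∀ i, LinearMap.trace ℂ _ ((adjoint (Rop μ (e n i)) ∘ₗ Rop μ (e n i)) ∘ₗ A)
      = ∑ j, ⟪μ (e n j) (e n i), μ (A (e n j)) (e n i)⟫_ℂ := fun i => by
    rw [trace_eq]
    simp [LinearMap.adjoint_inner_right, Rop]
  have hs : ∀ f : Fin n → E n →ₗ[ℂ] E n, (∑ i, f i) ∘ₗ A = ∑ i, f i ∘ₗ A :=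
    fun f => Finset.sum_mul _ f A
  simp only [Mmap, LinearMap.sub_comp, LinearMap.smul_comp, hs, map_sub, map_smul,
    map_sum, h1, h2, h3, smul_eq_mul]
  rw [Finset.sum_comm (f := fun i j => ⟪μ (e n j) (e n i), μ (A (e n j)) (e n i)⟫_ℂ)]
  simp only [pair, act_apply, inner_sub_right, Finset.sum_sub_distrib]
  ring

lemma act_commutator {n : ℕ} (A B : E n →ₗ[ℂ] E n) (ν : Vb n) :
    act (A ∘ₗ B - B ∘ₗ A) ν = act A (act B ν) - act B (act A ν) := by
  ext1 X
  ext1 Y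
  simp only [act_apply, LinearMap.sub_apply, LinearMap.comp_apply, map_sub]
  abel

lemma act_eq_zero_iff {n : ℕ} (A : E n →ₗ[ℂ] E n) (ν : Vb n) : act A ν = 0 ↔ IsDer ν A := by
  constructor
  · intro h X Y
    have := act_apply A ν X Y
    rw [h, LinearMap.zero_apply, LinearMap.zero_apply, sub_sub] at this
    exact sub_eq_zero.mp this.symm
  · intro h
    ext1 X
    ext1 Y
    rw [act_apply, h X Y]
    simp

lemma pair_self_eq_zero {n : ℕ} (ν : Vb n) (h : pair ν ν = 0) : ν = 0 := by
  have h' : ∑ i, ∑ j, ‖ν (e n i) (e n j)‖ ^ 2 = 0 := by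
    have : ((∑ i, ∑ j, ‖ν (e n i) (e n j)‖ ^ 2 : ℝ) : ℂ) = 0 := by
      rw [← h]
      simp [pair, inner_self_eq_norm_sq_to_K]
    exact_mod_cast this
  have h0 : ∀ i j, ν (e n i) (e n j) = 0 := fun i j => by
    rw [Finset.sum_eq_zero_iff_of_nonneg (fun _ _ => by positivity)] at h'
    have := h' i (Finset.mem_univ _)
    rw [Finset.sum_eq_zero_iff_of_nonneg (fun _ _ => by positivity)] at this
    simpa using this j (Finset.mem_univ _)
  refine (EuclideanSpace.basisFun (Fin n) ℂ).toBasis.ext fun i => ?_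
  refine (EuclideanSpace.basisFun (Fin n) ℂ).toBasis.ext fun j => ?_
  simpa [e] using h0 i j

lemma adjoint_Mmap {n : ℕ} (μ : Vb n) : adjoint (Mmap μ) = Mmap μ := by
  have h2 : (starRingEnd ℂ) 2 = 2 := Complex.conj_ofNat 2
  simp [Mmap, LinearMap.adjoint_comp, map_smulₛₗ, h2]

/-- If `M_μ - c` equals `D`, the adjoint of a derivation commuting with `D` is a derivation. -/
lemma isDer_adjoint {n : ℕ} (μ : Vb n) (c : ℂ) (D A : E n →ₗ[ℂ] E n)
    (hM : Mmap μ = c • (LinearMap.id : E n →ₗ[ℂ] E n) + D)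
    (hA : IsDer μ A) (hDA : D ∘ₗ A = A ∘ₗ D) : IsDer μ (adjoint A) := by
  rw [← act_eq_zero_iff]
  apply pair_self_eq_zero
  have h1 : pair μ (act (A ∘ₗ adjoint A - adjoint A ∘ₗ A) μ)
      = pair (act (adjoint A) μ) (act (adjoint A) μ) := by
    rw [act_commutator, (act_eq_zero_iff A μ).2 hA, ← pair_act]
    congr 1
    ext1 X
    ext1 Y
    simp [act_apply]
  have h2 := trace_Mmap μ (A ∘ₗ adjoint A - adjoint A ∘ₗ A)
  have h3 : LinearMap.trace ℂ _ (A ∘ₗ adjoint A) = LinearMap.trace ℂ _ (adjoint A ∘ₗ A) :=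
    LinearMap.trace_mul_comm ℂ A (adjoint A)
  have h4 : LinearMap.trace ℂ _ (D ∘ₗ A ∘ₗ adjoint A)
      = LinearMap.trace ℂ _ (D ∘ₗ adjoint A ∘ₗ A) := by
    rw [← LinearMap.comp_assoc, hDA]
    exact LinearMap.trace_mul_comm ℂ A (D * adjoint A)
  rw [h1, hM] at h2
  simp only [LinearMap.add_comp, LinearMap.comp_sub, LinearMap.smul_comp, LinearMap.id_comp,
    map_add, map_sub, map_smul, h3, h4, sub_self] at h2
  simpa using h2.symm

/-- An operator `A` commuting with a Hermitian `D` and vanishing on `ker D` has an adjoint vanishing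
on `ker D`. -/
lemma adjoint_apply_ker {n : ℕ} (D A : E n →ₗ[ℂ] E n) (hD : adjoint D = D)
    (hDA : D ∘ₗ A = A ∘ₗ D) (Z : E n) (hZ : D Z = 0) (hA : ∀ W, D W = 0 → A W = 0) :
    adjoint A Z = 0 := by
  have hc : adjoint A ∘ₗ D = D ∘ₗ adjoint A := by
    have := congrArg adjoint hDA
    rwa [LinearMap.adjoint_comp, LinearMap.adjoint_comp, hD] at this
  have h1 : D (adjoint A Z) = 0 := by
    have := LinearMap.congr_fun hc Z
    simpa [hZ] using this.symm
  rw [← inner_self_eq_zero (𝕜 := ℂ), LinearMap.adjoint_inner_left, hA _ h1, inner_zero_right]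

/-- Let `0 ≠ μ` be a symmetric Leibniz structure with `M_μ = c·I + D`, `D ∈ Der(μ)`,
and `𝔩₀ = ker D`.  If `Z ∈ 𝔩₀` satisfies `μ(Z,A) = μ(A,Z) = 0` for all `A ∈ 𝔩₀`,
then `L^μ_Z` and `R^μ_Z` are normal operators. -/
theorem central_kerD_normal {n : ℕ} (μ : Vb n) (hμ : μ ≠ 0)
    (hsym : IsSymLeibniz μ)
    (c : ℝ) (D : E n →ₗ[ℂ] E n) (hDer : IsDer μ D)
    (hM : Mmap μ = (c : ℂ) • (LinearMap.id : E n →ₗ[ℂ] E n) + D)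
    (Z : E n) (hZ : Z ∈ LinearMap.ker D)
    (hZc : ∀ A ∈ LinearMap.ker D, μ Z A = 0 ∧ μ A Z = 0) :
    Lop μ Z ∘ₗ adjoint (Lop μ Z) - adjoint (Lop μ Z) ∘ₗ Lop μ Z = 0 ∧
    Rop μ Z ∘ₗ adjoint (Rop μ Z) - adjoint (Rop μ Z) ∘ₗ Rop μ Z = 0 := by
  have hD : adjoint D = D := by
    have h := adjoint_Mmap μ
    rw [hM, map_add, map_smulₛₗ, Complex.conj_ofReal, LinearMap.adjoint_id] at h
    exact add_left_cancel h
  have hDZ : D Z = 0 := hZ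
  have hLD : D ∘ₗ Lop μ Z = Lop μ Z ∘ₗ D := by
    ext1 Y
    simp [Lop, hDer Z Y, hDZ]
  have hRD : D ∘ₗ Rop μ Z = Rop μ Z ∘ₗ D := by
    ext1 Y
    simp [Rop, hDer Y Z, hDZ]
  have hL := isDer_adjoint μ c D (Lop μ Z) hM (fun X Y => hsym.1 Z X Y) hLD
  have hR := isDer_adjoint μ c D (Rop μ Z) hM (fun X Y => hsym.2 X Y Z) hRD
  have hLZ := adjoint_apply_ker D (Lop μ Z) hD hLD Z hDZ fun W hW => (hZc W hW).1
  have hRZ := adjoint_apply_ker D (Rop μ Z) hD hRD Z hDZ fun W hW => (hZc W hW).2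
  constructor
  · ext1 Y
    have h := hL Z Y
    rw [hLZ] at h
    simpa [sub_eq_zero, Lop] using h.symm
  · ext1 Y
    have h := hR Y Z
    rw [hRZ] at h
    simpa [sub_eq_zero, Rop] using h.symm
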